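/- For every t ≥ 0 and all bounded measurable functions f, g : ℝᵈ → ℝ, one has ∫_{ℝᵈ} (P_t f)(x) g(x) dγ(x) = ∫_{ℝᵈ} f(x) (P_t g)(x) dγ(x); that is, the Ornstein–Uhlenbeck semigroup P_t is symmetric (self-adjoint) with respect to the Gaussian measure γ. -/

import Mathlib

open MeasureTheory Real
open scoped ENNReal RealInnerProductSpace

/-- The centered Gaussian measure `N(0, C)` on `ℝᵈ` (realized as `EuclideanSpace ℝ (Fin k)`),
with covariance matrix `C`, defined via its density with respect to Lebesgue measure. -/
noncomputable def gaussianM {k : ℕ} (C : Matrix (Fin k) (Fin k) ℝ) :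
    Measure (EuclideanSpace ℝ (Fin k)) :=
  MeasureTheory.volume.withDensity fun x =>
    ENNReal.ofReal ((2 * π) ^ (-(k : ℝ) / 2) * C.det ^ (-(1 : ℝ) / 2) *
      Real.exp (-(⟪x, (WithLp.toLp 2 (Matrix.mulVec C⁻¹ x) : EuclideanSpace ℝ (Fin k))⟫) / 2))

/-- The Ornstein–Uhlenbeck (Mehler) semigroup associated to the measure `γ`:
`P_t f (x) = ∫ f (e^{-t/2} x + √(1 - e^{-t}) z) dγ(z)`. -/
noncomputable def OU {k : ℕ} (γ : Measure (EuclideanSpace ℝ (Fin k))) (t : ℝ)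
    (f : EuclideanSpace ℝ (Fin k) → ℝ) (x : EuclideanSpace ℝ (Fin k)) : ℝ :=
  ∫ z, f (Real.exp (-t / 2) • x + Real.sqrt (1 - Real.exp (-t)) • z) ∂γ

/-!
For `c² + s² = 1` the reflection `(x, z) ↦ (c x + s z, s x - c z)` of `E × E` preserves Lebesgue
measure and the sum `Q x + Q z` for every quadratic form `Q`, hence it preserves `γ ⊗ γ` for every
centered Gaussian `γ`. With `c = e^{-t/2}` and `s = √(1 - e^{-t})`, the left-hand side of the
symmetry relation is the integral of `f (c x + s z) g x` against `γ ⊗ γ`. As the reflection is an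
involution, changing variables by it exchanges the points `c x + s z` and `x`, which produces the
right-hand side.
-/

open Function
open scoped Matrix

section MeasurePreserving

lemma measurePreserving_withDensity_comp {α β : Type*} [MeasurableSpace α] [MeasurableSpace β]
    {μ : Measure α} {ν : Measure β} {T : α → β} (hT : MeasurePreserving T μ ν)
    {φ : β → ℝ≥0∞} (hφ : Measurable φ) :
    MeasurePreserving T (μ.withDensity (φ ∘ T)) (ν.withDensity φ) := by
  refine ⟨hT.measurable, Measure.ext fun A hA => ?_⟩
  rw [Measure.map_apply hT.measurable hA, withDensity_apply _ hA,
    withDensity_apply _ (hT.measurable hA), ← hT.setLIntegral_comp_preimage hA hφ]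
  rfl

lemma measurePreserving_addHaar_of_involutive {E : Type*} [NormedAddCommGroup E] [NormedSpace ℝ E]
    [FiniteDimensional ℝ E] [MeasurableSpace E] [BorelSpace E] (μ : Measure E)
    [μ.IsAddHaarMeasure] {T : E →ₗ[ℝ] E} (hT : Involutive T) : MeasurePreserving T μ μ := by
  have det_mul_det : LinearMap.det T * LinearMap.det T = 1 := by
    rw [← map_mul, show T * T = 1 from LinearMap.ext hT, map_one]
  have abs_det : |LinearMap.det T| = 1 := by
    rcases mul_self_eq_one_iff.mp det_mul_det with h | h <;> simp [h]
  refine ⟨T.continuous_of_finiteDimensional.measurable, ?_⟩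
  rw [Measure.map_linearMap_addHaar_eq_smul_addHaar _ (left_ne_zero_of_mul_eq_one det_mul_det),
    abs_inv, abs_det, inv_one, ENNReal.ofReal_one, one_smul]

end MeasurePreserving

section InvolutiveSymmetry

variable {α 𝕜 : Type*} [MeasurableSpace α] [RCLike 𝕜] {γ : Measure α} {σ : α × α → α × α}
  {f g : α → 𝕜}

lemma integral_integral_mul_comm_of_involutive [SFinite γ] (hσ : Involutive σ)
    (hγ : MeasurePreserving σ (γ.prod γ) (γ.prod γ))
    (hfg : Integrable (fun p => f (σ p).1 * g p.1) (γ.prod γ)) :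
    ∫ x, (∫ z, f (σ (x, z)).1 ∂γ) * g x ∂γ = ∫ x, f x * ∫ z, g (σ (x, z)).1 ∂γ ∂γ := by
  have σ_emb : MeasurableEmbedding σ :=
    (MeasurableEquiv.ofInvolutive σ hσ hγ.measurable).measurableEmbedding
  have swap : (fun p => f (σ p).1 * g p.1) = (fun p => f p.1 * g (σ p).1) ∘ σ := by
    funext p
    simp only [comp_apply, hσ p]
  have hfg' : Integrable (fun p => f p.1 * g (σ p).1) (γ.prod γ) := by
    rwa [swap, hγ.integrable_comp_emb σ_emb] at hfg
  calc ∫ x, (∫ z, f (σ (x, z)).1 ∂γ) * g x ∂γ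
      = ∫ p, f (σ p).1 * g p.1 ∂γ.prod γ := by
        simp only [integral_prod _ hfg, integral_mul_const]
    _ = ∫ p, f p.1 * g (σ p).1 ∂γ.prod γ := by
        rw [swap]
        exact hγ.integral_comp σ_emb fun p => f p.1 * g (σ p).1
    _ = ∫ x, f x * ∫ z, g (σ (x, z)).1 ∂γ ∂γ := by
        simp only [integral_prod _ hfg', integral_const_mul]

lemma integral_integral_mul_comm_of_involutive_of_memLp [IsFiniteMeasure γ] (hσ : Involutive σ)
    (hγ : MeasurePreserving σ (γ.prod γ) (γ.prod γ)) {p q : ℝ≥0∞} [p.HolderConjugate q]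
    (hf : MemLp f p γ) (hg : MemLp g q γ) :
    ∫ x, (∫ z, f (σ (x, z)).1 ∂γ) * g x ∂γ = ∫ x, f x * ∫ z, g (σ (x, z)).1 ∂γ ∂γ :=
  integral_integral_mul_comm_of_involutive hσ hγ <|
    ((hf.comp_fst γ).comp_measurePreserving hγ).integrable_mul (hg.comp_fst γ)

end InvolutiveSymmetry

section MehlerReflection

/-- The linear map `(x, z) ↦ (c x + s z, s x - c z)`, whose first component is the argument of `f`
in Mehler's formula. Unlike the rotation with the same first component, it is an involution when
`c ^ 2 + s ^ 2 = 1`. -/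
def mehlerReflection (E : Type*) [AddCommGroup E] [Module ℝ E] (c s : ℝ) : E × E →ₗ[ℝ] E × E :=
  (c • LinearMap.fst ℝ E E + s • LinearMap.snd ℝ E E).prod
    (s • LinearMap.fst ℝ E E - c • LinearMap.snd ℝ E E)

lemma mehlerReflection_apply {E : Type*} [AddCommGroup E] [Module ℝ E] (c s : ℝ) (p : E × E) :
    mehlerReflection E c s p = (c • p.1 + s • p.2, s • p.1 - c • p.2) :=
  rfl

lemma mehlerReflection_involutive {E : Type*} [AddCommGroup E] [Module ℝ E] {c s : ℝ}
    (h : c ^ 2 + s ^ 2 = 1) : Involutive (mehlerReflection E c s) := by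
  intro p
  simp only [mehlerReflection_apply]
  ext
  · linear_combination (norm := module) h • p.1
  · linear_combination (norm := module) h • p.2

variable {E : Type*} [NormedAddCommGroup E] [NormedSpace ℝ E]

lemma apply_self_add_apply_self_mehlerReflection (B : E →L[ℝ] E →L[ℝ] ℝ) {c s : ℝ}
    (h : c ^ 2 + s ^ 2 = 1) (p : E × E) :
    B (mehlerReflection E c s p).1 (mehlerReflection E c s p).1
      + B (mehlerReflection E c s p).2 (mehlerReflection E c s p).2
      = B p.1 p.1 + B p.2 p.2 := by
  simp only [mehlerReflection_apply, map_add, map_sub, map_smul, add_apply, sub_apply, smul_apply,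
    smul_eq_mul]
  linear_combination (B p.1 p.1 + B p.2 p.2) * h

variable [FiniteDimensional ℝ E] [MeasurableSpace E] [BorelSpace E]

lemma measurePreserving_mehlerReflection_withDensity (μ : Measure E) [μ.IsAddHaarMeasure]
    {φ : E → ℝ≥0∞} (hφ : Measurable φ) {c s : ℝ} (h : c ^ 2 + s ^ 2 = 1)
    (hφ_inv : ∀ p, φ (mehlerReflection E c s p).1 * φ (mehlerReflection E c s p).2
      = φ p.1 * φ p.2) :
    MeasurePreserving (mehlerReflection E c s)
      ((μ.withDensity φ).prod (μ.withDensity φ)) ((μ.withDensity φ).prod (μ.withDensity φ)) := by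
  rw [prod_withDensity hφ hφ]
  convert measurePreserving_withDensity_comp
    (measurePreserving_addHaar_of_involutive (μ.prod μ) (mehlerReflection_involutive h))
    (φ := fun p => φ p.1 * φ p.2) (by fun_prop) using 2
  exact (funext hφ_inv).symm

lemma measurePreserving_mehlerReflection_exp_neg_form (μ : Measure E) [μ.IsAddHaarMeasure]
    (B : E →L[ℝ] E →L[ℝ] ℝ) (K : ℝ) {c s : ℝ} (h : c ^ 2 + s ^ 2 = 1) :
    let γ := μ.withDensity fun x => ENNReal.ofReal (K * exp (-B x x / 2))
    MeasurePreserving (mehlerReflection E c s) (γ.prod γ) (γ.prod γ) := by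
  refine measurePreserving_mehlerReflection_withDensity μ (by fun_prop) h fun p => ?_
  have ofReal_mul_ofReal (x z : E) :
      ENNReal.ofReal (K * exp (-B x x / 2)) * ENNReal.ofReal (K * exp (-B z z / 2))
        = ENNReal.ofReal K ^ 2 * ENNReal.ofReal (exp (-(B x x + B z z) / 2)) := by
    rw [ENNReal.ofReal_mul' (exp_nonneg _), ENNReal.ofReal_mul' (exp_nonneg _), mul_mul_mul_comm,
      ← ENNReal.ofReal_mul (exp_nonneg _), ← exp_add, ← sq]
    ring_nf
  rw [ofReal_mul_ofReal, ofReal_mul_ofReal, apply_self_add_apply_self_mehlerReflection B h]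

end MehlerReflection

section Integrability

lemma isCoercive_of_forall_apply_self_pos {E : Type*} [NormedAddCommGroup E] [NormedSpace ℝ E]
    [FiniteDimensional ℝ E] {B : E →L[ℝ] E →L[ℝ] ℝ} (hB : ∀ x, x ≠ 0 → 0 < B x x) :
    IsCoercive B := by
  have := FiniteDimensional.proper_real E
  obtain ⟨a, a_pos, ha⟩ : ∃ a, 0 < a ∧ ∀ x ∈ Metric.sphere (0 : E) 1, a ≤ B x x :=
    (isCompact_sphere (0 : E) 1).exists_forall_le' (by fun_prop)
      fun x hx => hB x (ne_zero_of_mem_unit_sphere ⟨x, hx⟩)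
  refine ⟨a, a_pos, fun x => ?_⟩
  rcases eq_or_ne x 0 with rfl | hx
  · simp
  have norm_pos : 0 < ‖x‖ := norm_pos_iff.mpr hx
  have on_sphere : a ≤ B (‖x‖⁻¹ • x) (‖x‖⁻¹ • x) := ha _ (by simp [norm_smul, norm_pos.ne'])
  simp only [map_smul, smul_apply, smul_eq_mul] at on_sphere
  calc a * ‖x‖ * ‖x‖ ≤ ‖x‖⁻¹ * (‖x‖⁻¹ * B x x) * ‖x‖ * ‖x‖ := by gcongr
    _ = B x x := by field_simp

variable {E : Type*} [NormedAddCommGroup E] [InnerProductSpace ℝ E] [FiniteDimensional ℝ E]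
  [MeasurableSpace E] [BorelSpace E]

lemma integrable_exp_neg_mul_sq_norm {b : ℝ} (hb : 0 < b) :
    Integrable fun x : E => exp (-b * ‖x‖ ^ 2) := by
  have complex_integrable := GaussianFourier.integrable_cexp_neg_mul_sq_norm_add (V := E)
    (b := b) (by simpa using hb) 0 0
  refine complex_integrable.norm.congr (.of_forall fun x => ?_)
  simp [Complex.norm_exp, ← Complex.ofReal_pow]

lemma integrable_exp_neg_form_of_isCoercive {B : E →L[ℝ] E →L[ℝ] ℝ} (hB : IsCoercive B) :
    Integrable fun x => exp (-B x x / 2) := by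
  obtain ⟨a, a_pos, ha⟩ := hB
  refine (integrable_exp_neg_mul_sq_norm (half_pos a_pos)).mono'
    (Continuous.aestronglyMeasurable (by fun_prop)) (.of_forall fun x => ?_)
  rw [norm_of_nonneg (exp_nonneg _), exp_le_exp]
  linarith [ha x]

end Integrability

section GaussianMeasure

variable {k : ℕ}

/-- The bilinear form `(x, y) ↦ ⟪C⁻¹ x, y⟫` of the precision matrix `C⁻¹`; the density of
`gaussianM C` is proportional to `x ↦ exp (-precisionForm C x x / 2)`. The arguments are flipped
so that its diagonal is definitionally the exponent in `gaussianM`. -/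
noncomputable def precisionForm (C : Matrix (Fin k) (Fin k) ℝ) :
    EuclideanSpace ℝ (Fin k) →L[ℝ] EuclideanSpace ℝ (Fin k) →L[ℝ] ℝ :=
  (innerSL ℝ).flip ∘L Matrix.toEuclideanCLM (𝕜 := ℝ) C⁻¹

lemma gaussianM_eq_withDensity_precisionForm (C : Matrix (Fin k) (Fin k) ℝ) :
    gaussianM C = volume.withDensity fun x => ENNReal.ofReal
      ((2 * π) ^ (-(k : ℝ) / 2) * C.det ^ (-(1 : ℝ) / 2) * exp (-precisionForm C x x / 2)) :=
  rfl

lemma precisionForm_apply_self_pos {C : Matrix (Fin k) (Fin k) ℝ} (hC : C.PosDef)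
    {x : EuclideanSpace ℝ (Fin k)} (hx : x ≠ 0) :
    0 < precisionForm C x x := by
  have ofLp_ne_zero : x.ofLp ≠ 0 := by simpa using hx
  calc 0 < x.ofLp ⬝ᵥ C⁻¹ *ᵥ x.ofLp := hC.inv.dotProduct_mulVec_pos ofLp_ne_zero
    _ = precisionForm C x x := (Matrix.inner_toEuclideanCLM C⁻¹ x x).symm

lemma isFiniteMeasure_gaussianM {C : Matrix (Fin k) (Fin k) ℝ} (hC : C.PosDef) :
    IsFiniteMeasure (gaussianM C) := by
  have coercive : IsCoercive (precisionForm C) :=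
    isCoercive_of_forall_apply_self_pos fun _ => precisionForm_apply_self_pos hC
  rw [gaussianM_eq_withDensity_precisionForm]
  exact isFiniteMeasure_withDensity_ofReal
    ((integrable_exp_neg_form_of_isCoercive coercive).const_mul _).2

lemma measurePreserving_mehlerReflection_gaussianM (C : Matrix (Fin k) (Fin k) ℝ) {c s : ℝ}
    (h : c ^ 2 + s ^ 2 = 1) :
    MeasurePreserving (mehlerReflection (EuclideanSpace ℝ (Fin k)) c s)
      ((gaussianM C).prod (gaussianM C)) ((gaussianM C).prod (gaussianM C)) :=
  measurePreserving_mehlerReflection_exp_neg_form volume (precisionForm C) _ h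

end GaussianMeasure

lemma exp_neg_half_sq_add_sqrt_one_sub_exp_neg_sq {t : ℝ} (ht : 0 ≤ t) :
    exp (-t / 2) ^ 2 + √(1 - exp (-t)) ^ 2 = 1 := by
  have exp_le_one : exp (-t) ≤ 1 := exp_le_one_iff.mpr (neg_nonpos.mpr ht)
  rw [sq_sqrt (sub_nonneg.mpr exp_le_one), ← exp_nat_mul]
  ring_nf

theorem ou_semigroup_symmetric_general {d : ℕ} {C : Matrix (Fin d) (Fin d) ℝ} (hC : C.PosDef)
    {t : ℝ} (ht : 0 ≤ t) {p q : ℝ≥0∞} [p.HolderConjugate q] {f g : EuclideanSpace ℝ (Fin d) → ℝ}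
    (hf : MemLp f p (gaussianM C)) (hg : MemLp g q (gaussianM C)) :
    ∫ x, OU (gaussianM C) t f x * g x ∂(gaussianM C)
      = ∫ x, f x * OU (gaussianM C) t g x ∂(gaussianM C) := by
  have := isFiniteMeasure_gaussianM hC
  have cos_sin := exp_neg_half_sq_add_sqrt_one_sub_exp_neg_sq ht
  exact integral_integral_mul_comm_of_involutive_of_memLp (mehlerReflection_involutive cos_sin)
    (measurePreserving_mehlerReflection_gaussianM C cos_sin) hf hg

/-- The Ornstein–Uhlenbeck semigroup is symmetric (self-adjoint) with respect to the
Gaussian measure `γ = N(0, C)`. -/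
theorem ou_semigroup_symmetric (d : ℕ) (hd : 0 < d)
    (C : Matrix (Fin d) (Fin d) ℝ) (hC : C.PosDef)
    (t : ℝ) (ht : 0 ≤ t)
    (f g : EuclideanSpace ℝ (Fin d) → ℝ)
    (hf : Measurable f) (hg : Measurable g)
    (Mf : ℝ) (hfb : ∀ x, |f x| ≤ Mf) (Mg : ℝ) (hgb : ∀ x, |g x| ≤ Mg) :
    ∫ x, OU (gaussianM C) t f x * g x ∂(gaussianM C)
      = ∫ x, f x * OU (gaussianM C) t g x ∂(gaussianM C) := by
  have := isFiniteMeasure_gaussianM hC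
  have : ENNReal.HolderConjugate ∞ 1 := .top_one
  exact ou_semigroup_symmetric_general hC ht (p := ∞) (q := 1)
    (memLp_top_of_bound hf.aestronglyMeasurable Mf (.of_forall hfb))
    (MemLp.of_bound hg.aestronglyMeasurable Mg (.of_forall hgb))
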